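/- Let U be a consistent c.e. theory that is effectively if-essentially incomplete, as witnessed by a partial computable function Φ, and let X and Y be disjoint c.e. subsets of ℕ. Then ⟨X, Y⟩ ≤_s ⟨U_p, U_r⟩, i.e. there is a total computable function f such that n ∈ X implies f(n) ∈ U_p and n ∈ Y implies f(n) ∈ U_r; moreover, an index of such an f can be obtained effectively from an index of Φ and indices of X and Y. -/

import Mathlib

open FirstOrder FirstOrder.Language

namespace PourEl

/-! ## Recursion-theoretic notions -/

/-- The `i`-th computably enumerable subset of `ℕ` (the domain of the `i`-th
partial computable function). -/
def WSet (i : ℕ) : Set ℕ :=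
  {n | ((Denumerable.ofNat Nat.Partrec.Code i).eval n).Dom}

/-- A set of natural numbers is computably enumerable. -/
def CE (A : Set ℕ) : Prop := ∃ i, A = WSet i

/-- A set of natural numbers is computable. -/
def Comp (A : Set ℕ) : Prop := ComputablePred (· ∈ A)

/-- Disjoint sets `X`, `Y` are computably separable iff some computable set
contains `X` and is disjoint from `Y`. -/
def CompSeparable (X Y : Set ℕ) : Prop :=
  ∃ Z : Set ℕ, Comp Z ∧ X ⊆ Z ∧ Y ∩ Z = ∅

/-- Computable inseparability. -/
def CompInseparable (X Y : Set ℕ) : Prop := ¬ CompSeparable X Y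

/-- `Z` and `W` weakly biseparate `X` and `Y`. -/
def WeaklyBiseparate {α : Type*} (Z W X Y : Set α) : Prop :=
  X ⊆ Z ∧ Y ⊆ W ∧ Z ∩ Y = ∅ ∧ W ∩ X = ∅

/-- `Z` and `W` biseparate `X` and `Y`. -/
def Biseparate {α : Type*} (Z W X Y : Set α) : Prop :=
  WeaklyBiseparate Z W X Y ∧ Z ∩ W = ∅

/-! ## Logical notions -/

variable {L : FirstOrder.Language}

/-- Provability: `φ` is a first-order consequence of `U` (by Gödel completeness,
semantic consequence). -/
def Prv (U : L.Theory) (φ : L.Sentence) : Prop := U ⊨ᵇ φ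

/-- `U_p`: the set of theorems of `U`. -/
def Thms (U : L.Theory) : Set L.Sentence := {φ | Prv U φ}

/-- `U_r`: the set of refutable sentences of `U`. -/
def Refut (U : L.Theory) : Set L.Sentence := {φ | Prv U ∼φ}

/-- Consistency: `U ⊬ ⊥`. -/
def Consistent (U : L.Theory) : Prop := ¬ Prv U ⊥

/-- `φ` is independent of `U`: `U` proves neither `φ` nor `¬φ`. -/
def Independent (U : L.Theory) (φ : L.Sentence) : Prop := ¬ Prv U φ ∧ ¬ Prv U ∼φ

/-- `U` is incomplete: some sentence is independent of it. -/
def Incomplete (U : L.Theory) : Prop := ∃ φ, Independent U φ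

/-- Mono-consequence: `U ⊢_m φ` iff `ψ ⊢ φ` for some `ψ ∈ U`. -/
def MPrv (U : L.Theory) (φ : L.Sentence) : Prop := ∃ ψ ∈ U, Prv {ψ} φ

/-- `U_m`: the set of mono-theorems of `U`. -/
def MThms (U : L.Theory) : Set L.Sentence := {φ | MPrv U φ}

/-- `U_n`: the set of mono-refutable sentences of `U`. -/
def MRefut (U : L.Theory) : Set L.Sentence := {φ | MPrv U ∼φ}

/-- Mono-consistency: every member is consistent by itself. -/
def MonoConsistent (U : L.Theory) : Prop := ∀ ψ ∈ U, Consistent ({ψ} : L.Theory)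

/-- `Û`: the set of all non-empty finite conjunctions of elements of `U`. -/
def hat (U : L.Theory) : L.Theory :=
  {φ | ∃ (ψ : L.Sentence) (l : List L.Sentence),
    ψ ∈ U ∧ (∀ χ ∈ l, χ ∈ U) ∧ φ = l.foldl (· ⊓ ·) ψ}

/-- `U ⋓ V`. -/
def Cup (U V : L.Theory) : L.Theory :=
  {χ | ∃ φ ∈ U, ∃ ψ ∈ V, χ = φ ⊓ ψ}

/-- `U ⋐ V`: for every `φ ∈ U` and `ψ ∈ V` there is `ρ ∈ V` with `ρ ⊢ φ ∧ ψ`. -/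
def Ssub (U V : L.Theory) : Prop :=
  ∀ φ ∈ U, ∀ ψ ∈ V, ∃ ρ ∈ V, Prv {ρ} (φ ⊓ ψ)

/-! ## Gödel numbering -/

/-- A Gödel numbering of the sentences of a (countable) signature: a bijective
coding of sentences by natural numbers that is effective for the basic syntactic
operations, and for which the theorems of a c.e. theory can be effectively
enumerated from an index of the theory. -/
structure Numbering (L : FirstOrder.Language) where
  equiv : L.Sentence ≃ ℕ
  neg_comp : Computable fun n => equiv ∼(equiv.symm n)
  inf_comp : Computable₂ fun m n => equiv (equiv.symm m ⊓ equiv.symm n)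
  imp_comp : Computable₂ fun m n => equiv (equiv.symm m ⟹ equiv.symm n)
  iff_comp : Computable₂ fun m n => equiv (equiv.symm m ⇔ equiv.symm n)
  thmIdx : ℕ → ℕ
  thmIdx_comp : Computable thmIdx
  thmIdx_spec : ∀ i, WSet (thmIdx i) = equiv '' Thms (equiv.symm '' WSet i)

namespace Numbering

variable (g : Numbering L)

/-- The code of a sentence. -/
def code (φ : L.Sentence) : ℕ := g.equiv φ

/-- The set of codes of a set of sentences. -/
def codes (S : Set L.Sentence) : Set ℕ := g.equiv '' S

/-- The theory axiomatised by the `i`-th c.e. set (identified with a set of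
sentences via the numbering). -/
def thy (i : ℕ) : L.Theory := g.equiv.symm '' WSet i

/-- The theory `U` is computably enumerable (with respect to the numbering). -/
def CEThy (U : L.Theory) : Prop := CE (g.codes U)

end Numbering


/-- `Φ` witnesses that `U` is effectively if-essentially `F`-incomplete: whenever
`W i` is a consistent finite extension of `U` (as a set of axioms), `Φ i`
converges to (the code of) a sentence in `F (W i)` independent of `W i`. -/
def IfEssWitness (g : Numbering L) (U : L.Theory)
    (F : Set L.Sentence → Set L.Sentence) (Φ : ℕ →. ℕ) : Prop :=
  ∀ i, (∃ Γ : Finset L.Sentence, g.thy i = U ∪ (Γ : Set L.Sentence)) →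
    Consistent (g.thy i) →
    ∃ n ∈ Φ i, ∃ φ : L.Sentence, g.code φ = n ∧ φ ∈ F (g.thy i) ∧ Independent (g.thy i) φ

/-- `U` is effectively if-essentially `F`-incomplete. -/
def EffIfEssIncomplete (g : Numbering L) (U : L.Theory)
    (F : Set L.Sentence → Set L.Sentence) : Prop :=
  ∃ Φ : ℕ →. ℕ, Partrec Φ ∧ IfEssWitness g U F Φ

/-! ## Auxiliary lemmas -/

theorem aux_inconsistent {U : L.Theory} {ψ : L.Sentence}
    (h : ¬ Consistent (U ∪ {ψ})) : Prv U ∼ψ := by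
  unfold Consistent Prv at h
  rw [not_not, Theory.models_sentence_iff] at h
  unfold Prv
  rw [Theory.models_sentence_iff]
  intro M
  change M ⊨ Formula.not ψ
  rw [Sentence.realize_not]
  intro hM
  have : M ⊨ (U ∪ {ψ} : L.Theory) := by
    refine Theory.model_union_iff.2 ⟨inferInstance, ?_⟩
    simpa using hM
  exact h (Theory.ModelType.of (U ∪ {ψ}) M)

theorem aux_not_not {U : L.Theory} {φ : L.Sentence} (h : Prv U ∼(∼φ)) : Prv U φ := by
  unfold Prv at *
  rw [Theory.models_sentence_iff] at *
  intro M
  have := h M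
  change M ⊨ Formula.not (Formula.not φ) at this
  rw [Sentence.realize_not, Sentence.realize_not, not_not] at this
  exact this

theorem aux_mem {U : L.Theory} {φ : L.Sentence} (h : φ ∈ U) : Prv U φ :=
  Theory.models_sentence_of_mem h

open Nat.Partrec in
/-- The semi-decision used: evaluate `e` at `i` giving `v`, wait for `n` to enter `W a`, and
accept iff `x = N v`. -/
theorem aux_branch {α : Type*} [Primcodable α] {e i a n x : α → ℕ} {N : ℕ → ℕ}
    (he : Computable e) (hi : Computable i) (ha : Computable a) (hn : Computable n)
    (hx : Computable x) (hN : Computable N) :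
    ∃ r : α →. ℕ, Partrec r ∧ ∀ y, (r y).Dom ↔
      ∃ v ∈ (Denumerable.ofNat Code (e y)).eval (i y), n y ∈ WSet (a y) ∧ x y = N v := by
  have h1 : Partrec fun y => (Denumerable.ofNat Code (e y)).eval (i y) :=
    Code.eval_part.comp ((Computable.ofNat _).comp he) hi
  have h2 : Partrec fun y => (Denumerable.ofNat Code (a y)).eval (n y) :=
    Code.eval_part.comp ((Computable.ofNat _).comp ha) hn
  have hd : Computable fun p : (α × ℕ) × ℕ => decide (x p.1.1 = N p.1.2) :=
    (Primrec.eq (α := ℕ)).decide.to_comp.comp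
      (hx.comp (Computable.fst.comp Computable.fst))
      (hN.comp (Computable.snd.comp Computable.fst))
  have h3 : Partrec fun p : (α × ℕ) × ℕ =>
      bif decide (x p.1.1 = N p.1.2) then Part.some 0 else (Part.none : Part ℕ) :=
    Partrec.cond hd (Computable.const 0).partrec Partrec.none
  refine ⟨fun y => ((Denumerable.ofNat Code (e y)).eval (i y)).bind fun v =>
    ((Denumerable.ofNat Code (a y)).eval (n y)).bind fun w =>
      bif decide (x y = N v) then Part.some 0 else (Part.none : Part ℕ), ?_, ?_⟩
  · exact h1.bind ((h2.comp Computable.fst).bind h3.to₂).to₂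
  · intro y
    rw [Part.dom_iff_mem]
    simp only [WSet, Set.mem_setOf_eq, Part.mem_bind_iff, Part.dom_iff_mem]
    constructor
    · rintro ⟨z, v, hv, w, hw, hz⟩
      refine ⟨v, hv, ⟨w, hw⟩, ?_⟩
      by_contra hne
      simp [hne] at hz
    · rintro ⟨v, hv, ⟨w, hw⟩, hz⟩
      exact ⟨0, v, hv, w, hw, by simp [hz]⟩

theorem aux_re_or {α : Type*} [Primcodable α] {f g : α →. ℕ} (hf : Partrec f) (hg : Partrec g) :
    ∃ r : α →. ℕ, Partrec r ∧ ∀ y, (r y).Dom ↔ (f y).Dom ∨ (g y).Dom := by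
  have c0 : ∀ {f : α →. ℕ}, Partrec f → Partrec fun y => (f y).map fun _ => 0 := fun hf =>
    hf.map (Computable.const 0).to₂
  obtain ⟨r, hr, h⟩ := Partrec.merge (c0 hf) (c0 hg) (by
    intro a x hx y hy
    simp only [Part.mem_map_iff] at hx hy
    obtain ⟨_, _, rfl⟩ := hx
    obtain ⟨_, _, rfl⟩ := hy
    rfl)
  refine ⟨r, hr, fun y => ?_⟩
  simp only [Part.dom_iff_mem, h, Part.mem_map_iff]
  constructor
  · rintro ⟨_, ⟨w, hw, _⟩ | ⟨w, hw, _⟩⟩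
    exacts [Or.inl ⟨w, hw⟩, Or.inr ⟨w, hw⟩]
  · rintro (⟨w, hw⟩ | ⟨w, hw⟩)
    exacts [⟨0, Or.inl ⟨w, hw, rfl⟩⟩, ⟨0, Or.inr ⟨w, hw, rfl⟩⟩]

open Nat.Partrec in
/-- Parametrised recursion theorem, giving self-referential indices. -/
theorem aux_rec (u : ℕ) {N : ℕ → ℕ} (hN : Computable N) :
    ∃ I : ℕ × ℕ × ℕ × ℕ → ℕ, Computable I ∧ ∀ e a b n x, x ∈ WSet (I (e, a, b, n)) ↔
      x ∈ WSet u ∨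
      (∃ v ∈ (Denumerable.ofNat Code e).eval (I (e, a, b, n)), n ∈ WSet a ∧ x = N v) ∨
      (∃ v ∈ (Denumerable.ofNat Code e).eval (I (e, a, b, n)), n ∈ WSet b ∧ x = v) := by
  let P : Code × ℕ → ℕ × ℕ × ℕ × ℕ := fun q => Denumerable.ofNat _ q.2.unpair.1
  have hP : Computable P := (Computable.ofNat _).comp
    (Computable.fst.comp (Primrec.unpair.to_comp.comp Computable.snd))
  let J : Code → ℕ × ℕ × ℕ × ℕ → ℕ := fun c p => Encodable.encode (Code.curry c (Encodable.encode p))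
  have hJ : Computable₂ J := Computable.encode.comp
    (Code.primrec₂_curry.to_comp.comp Computable.fst (Computable.encode.comp Computable.snd))
  have hi : Computable fun q : Code × ℕ => J q.1 (P q) := hJ.comp Computable.fst hP
  have he : Computable fun q : Code × ℕ => (P q).1 := Computable.fst.comp hP
  have ha : Computable fun q : Code × ℕ => (P q).2.1 := 
    Computable.fst.comp (Computable.snd.comp hP)
  have hb : Computable fun q : Code × ℕ => (P q).2.2.1 := 
    Computable.fst.comp (Computable.snd.comp (Computable.snd.comp hP))
  have hn : Computable fun q : Code × ℕ => (P q).2.2.2 := 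
    Computable.snd.comp (Computable.snd.comp (Computable.snd.comp hP))
  have hx : Computable fun q : Code × ℕ => q.2.unpair.2 :=
    Computable.snd.comp (Primrec.unpair.to_comp.comp Computable.snd)
  obtain ⟨r1, hr1, h1⟩ := aux_branch he hi ha hn hx hN
  obtain ⟨r2, hr2, h2⟩ := aux_branch he hi hb hn hx Computable.id
  have hr0 : Partrec fun q : Code × ℕ => (Denumerable.ofNat Code u).eval q.2.unpair.2 :=
    Code.eval_part.comp (Computable.const _) hx
  obtain ⟨r3, hr3, h3⟩ := aux_re_or hr1 hr2
  obtain ⟨r, hr, h⟩ := aux_re_or hr0 hr3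
  obtain ⟨c, hc⟩ := Code.fixed_point₂ (f := fun c y => r (c, y)) hr
  refine ⟨J c, hJ.comp (Computable.const c) Computable.id, fun e a b n x => ?_⟩
  have key : x ∈ WSet (J c (e, a, b, n)) ↔
      (r (c, Nat.pair (Encodable.encode (e, a, b, n)) x)).Dom := by
    simp only [WSet, Set.mem_setOf_eq, J, Denumerable.ofNat_encode, Code.eval_curry]
    rw [hc]
  have hPe : P (c, Nat.pair (Encodable.encode (e, a, b, n)) x) = (e, a, b, n) := by
    simp only [P, Nat.unpair_pair, Denumerable.ofNat_encode]
  rw [key, h, h3, h1, h2]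
  simp only [hPe, Nat.unpair_pair, id]
  rfl

open Nat.Partrec in
theorem aux_main (g : Numbering L) (U : L.Theory) (u : ℕ) (hu : g.codes U = WSet u)
    (hcon : Consistent U) (e a b n i : ℕ)
    (hwit : IfEssWitness g U (fun _ => (Set.univ : Set L.Sentence))
      ((Denumerable.ofNat Code e).eval))
    (hab : Disjoint (WSet a) (WSet b))
    (hI : ∀ x, x ∈ WSet i ↔ x ∈ WSet u ∨
      (∃ v ∈ (Denumerable.ofNat Code e).eval i, n ∈ WSet a ∧ x = g.equiv ∼(g.equiv.symm v)) ∨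
      (∃ v ∈ (Denumerable.ofNat Code e).eval i, n ∈ WSet b ∧ x = v)) :
    ∃ m ∈ (Denumerable.ofNat Code e).eval i,
      (n ∈ WSet a → m ∈ g.codes (Thms U)) ∧ (n ∈ WSet b → m ∈ g.codes (Refut U)) := by
  have hthy : ∀ ψ, ψ ∈ g.thy i ↔ ψ ∈ U ∨
      (∃ v ∈ (Denumerable.ofNat Code e).eval i, n ∈ WSet a ∧ ψ = ∼(g.equiv.symm v)) ∨
      (∃ v ∈ (Denumerable.ofNat Code e).eval i, n ∈ WSet b ∧ ψ = g.equiv.symm v) := by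
    intro ψ
    have h0 : ψ ∈ g.thy i ↔ g.equiv ψ ∈ WSet i := by
      simp [Numbering.thy, Equiv.symm_apply_eq]
    have h1 : g.equiv ψ ∈ WSet u ↔ ψ ∈ U := by
      rw [← hu]; simp [Numbering.codes]
    rw [h0, hI, h1]
    simp only [EmbeddingLike.apply_eq_iff_eq, ← Equiv.eq_symm_apply]
  by_cases hU : g.thy i = U
  · obtain ⟨m, hm, φ, hφ, -, hind⟩ := hwit i ⟨∅, by simp [hU]⟩ (hU ▸ hcon)
    have hφ' : g.equiv.symm m = φ := by rw [← hφ]; simp [Numbering.code]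
    refine ⟨m, hm, fun hn => ?_, fun hn => ?_⟩
    · exact absurd (aux_mem ((hthy _).2 (Or.inr (Or.inl ⟨m, hm, hn, rfl⟩)))) (hφ' ▸ hind.2)
    · exact absurd (aux_mem ((hthy _).2 (Or.inr (Or.inr ⟨m, hm, hn, rfl⟩)))) (hφ' ▸ hind.1)
  · have hm : ∃ m, m ∈ (Denumerable.ofNat Code e).eval i := by
      by_contra hne
      apply hU
      ext ψ
      rw [hthy]
      refine ⟨?_, Or.inl⟩
      rintro (h | ⟨v, hv, _⟩ | ⟨v, hv, _⟩)
      exacts [h, (hne ⟨v, hv⟩).elim, (hne ⟨v, hv⟩).elim]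
    obtain ⟨m, hm⟩ := hm
    refine ⟨m, hm, fun hn => ?_, fun hn => ?_⟩
    · have hnb : n ∉ WSet b := Set.disjoint_left.1 hab hn
      have ht : g.thy i = U ∪ {∼(g.equiv.symm m)} := by
        ext ψ
        rw [hthy]
        constructor
        · rintro (h | ⟨v, hv, _, h⟩ | ⟨v, hv, h, _⟩)
          · exact Or.inl h
          · rw [Part.mem_unique hv hm] at h; exact Or.inr h
          · exact (hnb h).elim
        · rintro (h | h)
          · exact Or.inl h
          · exact Or.inr (Or.inl ⟨m, hm, hn, h⟩)
      refine ⟨g.equiv.symm m, ?_, by simp⟩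
      refine aux_not_not (aux_inconsistent fun hc => ?_)
      rw [← ht] at hc
      obtain ⟨m', hm', φ, hφ, -, hind⟩ := hwit i ⟨{∼(g.equiv.symm m)}, by simp [ht]⟩ hc
      have hφ' : g.equiv.symm m = φ := by
        rw [Part.mem_unique hm hm', ← hφ]; simp [Numbering.code]
      exact hind.2 (aux_mem (by rw [ht, hφ']; exact Or.inr rfl))
    · have hna : n ∉ WSet a := Set.disjoint_right.1 hab hn
      have ht : g.thy i = U ∪ {g.equiv.symm m} := by
        ext ψ
        rw [hthy]
        constructor
        · rintro (h | ⟨v, hv, h, _⟩ | ⟨v, hv, _, h⟩)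
          · exact Or.inl h
          · exact (hna h).elim
          · rw [Part.mem_unique hv hm] at h; exact Or.inr h
        · rintro (h | h)
          · exact Or.inl h
          · exact Or.inr (Or.inr ⟨m, hm, hn, h⟩)
      refine ⟨g.equiv.symm m, ?_, by simp⟩
      refine aux_inconsistent fun hc => ?_
      rw [← ht] at hc
      obtain ⟨m', hm', φ, hφ, -, hind⟩ := hwit i ⟨{g.equiv.symm m}, by simp [ht]⟩ hc
      have hφ' : g.equiv.symm m = φ := by
        rw [Part.mem_unique hm hm', ← hφ]; simp [Numbering.code]
      exact hind.1 (aux_mem (by rw [ht, hφ']; exact Or.inr rfl))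

/-- If the consistent c.e. theory `U` is effectively
if-essentially incomplete, as witnessed by the partial computable `Φ`, and `X`,
`Y` are disjoint c.e. sets, then `⟨X, Y⟩ ≤_s ⟨U_p, U_r⟩`: some total computable
`f` maps `X` into (codes of) `U_p` and `Y` into `U_r`. Moreover, an index of
such a semi-reduction can be obtained computably from an index of the witness
and indices of the two sets. -/
theorem statement19 {L : FirstOrder.Language} (g : Numbering L) (U : L.Theory)
    (hU : g.CEThy U) (hcon : Consistent U)
    (Φ : ℕ →. ℕ) (hΦ : Partrec Φ)
    (hwit : IfEssWitness g U (fun _ => (Set.univ : Set L.Sentence)) Φ)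
    (X Y : Set ℕ) (hX : CE X) (hY : CE Y) (hXY : Disjoint X Y) :
    (∃ f : ℕ → ℕ, Computable f ∧
        (∀ n ∈ X, f n ∈ g.codes (Thms U)) ∧
        (∀ n ∈ Y, f n ∈ g.codes (Refut U))) ∧
      ∃ F : ℕ × ℕ × ℕ → ℕ, Computable F ∧
        ∀ e a b,
          IfEssWitness g U (fun _ => (Set.univ : Set L.Sentence))
            ((Denumerable.ofNat Nat.Partrec.Code e).eval) →
          Disjoint (WSet a) (WSet b) →
          ∀ n, ∃ m ∈ (Denumerable.ofNat Nat.Partrec.Code (F (e, a, b))).eval n,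
            (n ∈ WSet a → m ∈ g.codes (Thms U)) ∧
            (n ∈ WSet b → m ∈ g.codes (Refut U)) := by
  have part2 : ∃ F : ℕ × ℕ × ℕ → ℕ, Computable F ∧
        ∀ e a b,
          IfEssWitness g U (fun _ => (Set.univ : Set L.Sentence))
            ((Denumerable.ofNat Nat.Partrec.Code e).eval) →
          Disjoint (WSet a) (WSet b) →
          ∀ n, ∃ m ∈ (Denumerable.ofNat Nat.Partrec.Code (F (e, a, b))).eval n,
            (n ∈ WSet a → m ∈ g.codes (Thms U)) ∧
            (n ∈ WSet b → m ∈ g.codes (Refut U)) := by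
    obtain ⟨u, hu⟩ := hU
    obtain ⟨I, hI, hspec⟩ := aux_rec u g.neg_comp
    let Q : ℕ → ℕ × ℕ × ℕ := fun y => Denumerable.ofNat _ y.unpair.1
    have hQ : Computable Q := (Computable.ofNat _).comp
      (Computable.fst.comp Primrec.unpair.to_comp)
    have hn : Computable fun y : ℕ => y.unpair.2 :=
      Computable.snd.comp Primrec.unpair.to_comp
    have he : Computable fun y => (Q y).1 := Computable.fst.comp hQ
    have ha : Computable fun y => (Q y).2.1 := Computable.fst.comp (Computable.snd.comp hQ)
    have hb : Computable fun y => (Q y).2.2 := Computable.snd.comp (Computable.snd.comp hQ)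
    have hi : Computable fun y => I ((Q y).1, (Q y).2.1, (Q y).2.2, y.unpair.2) :=
      hI.comp (he.pair (ha.pair (hb.pair hn)))
    have hp : Partrec fun y => (Denumerable.ofNat Nat.Partrec.Code (Q y).1).eval
        (I ((Q y).1, (Q y).2.1, (Q y).2.2, y.unpair.2)) :=
      Nat.Partrec.Code.eval_part.comp ((Computable.ofNat _).comp he) hi
    obtain ⟨d, hd⟩ := Nat.Partrec.Code.exists_code.1 (Partrec.nat_iff.1 hp)
    refine ⟨fun p => Encodable.encode (Nat.Partrec.Code.curry d (Encodable.encode p)),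
      Computable.encode.comp (Nat.Partrec.Code.primrec₂_curry.to_comp.comp
        (Computable.const d) Computable.encode), fun e a b hw hab n => ?_⟩
    have hQe : Q (Nat.pair (Encodable.encode (e, a, b)) n) = (e, a, b) := by
      simp only [Q, Nat.unpair_pair, Denumerable.ofNat_encode]
    rw [Denumerable.ofNat_encode, Nat.Partrec.Code.eval_curry, hd]
    simp only [hQe, Nat.unpair_pair]
    exact aux_main g U u hu hcon e a b n _ hw hab (hspec e a b n)
  refine ⟨?_, part2⟩
  obtain ⟨F, -, hF⟩ := part2
  obtain ⟨a, rfl⟩ := hX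
  obtain ⟨b, rfl⟩ := hY
  obtain ⟨c, rfl⟩ := Nat.Partrec.Code.exists_code.1 (Partrec.nat_iff.1 hΦ)
  have := hF (Encodable.encode c) a b (by rwa [Denumerable.ofNat_encode]) hXY
  choose f hf h using this
  refine ⟨f, ?_, fun n => (h n).1, fun n => (h n).2⟩
  have hp : Partrec ((Denumerable.ofNat Nat.Partrec.Code
      (F (Encodable.encode c, a, b))).eval) :=
    Nat.Partrec.Code.eval_part.comp (Computable.const _) Computable.id
  exact hp.of_eq fun n => Part.eq_some_iff.2 (hf n)

end PourEl
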